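/- arXiv:math/0304381 — 8 statements merged into one kernel-verified Lean document; each statement's English description precedes it below -/
import Mathlib

section
/- Let a, b, c, d ∈ ℂ with a + b + c + d = 0, and let U ⊆ ℂ be an open set. Suppose y : ℂ → ℂ is differentiable on U and satisfies the Riccati equation x(x−1)·y'(x) = a·y(x)² + (b·x + c)·y(x) + d·x for all x ∈ U, and for every x ∈ U one has x ≠ 0, x ≠ 1 and y(x) ∉ {0, 1, x}. Then y solves P_VI(a²/2, −d²/2, (b+d)²/2, (1−(c+d+1)²)/2) on U. -/
/-- `y` solves the Painlevé VI equation with parameters `(α, β, γ, δ)` on `U`: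
`y` is twice differentiable on `U`, and at every `x ∈ U` we have `x ≠ 0`, `x ≠ 1`,
`y x ∉ {0, 1, x}` and the Painlevé VI equation holds. -/
def SolvesPVI (α β γ δ : ℂ) (U : Set ℂ) (y : ℂ → ℂ) : Prop :=
  (∀ x ∈ U, DifferentiableAt ℂ y x) ∧
  (∀ x ∈ U, DifferentiableAt ℂ (deriv y) x) ∧
  ∀ x ∈ U, x ≠ 0 ∧ x ≠ 1 ∧ y x ≠ 0 ∧ y x ≠ 1 ∧ y x ≠ x ∧
    deriv (deriv y) x =
      (1 / 2) * (1 / y x + 1 / (y x - 1) + 1 / (y x - x)) * (deriv y x) ^ 2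
        - (1 / x + 1 / (x - 1) + 1 / (y x - x)) * deriv y x
        + (y x * (y x - 1) * (y x - x) / (x ^ 2 * (x - 1) ^ 2)) *
            (α + β * x / (y x) ^ 2 + γ * (x - 1) / (y x - 1) ^ 2
              + δ * x * (x - 1) / (y x - x) ^ 2)

/-- **Lemma 1.** If `y` satisfies the Riccati equation
`x(x-1) y' = a y² + (b x + c) y + d x` on an open set `U` with `a + b + c + d = 0`,
and `x ≠ 0`, `x ≠ 1`, `y x ∉ {0, 1, x}` on `U`, then `y` solves
`P_VI(a²/2, -d²/2, (b+d)²/2, (1-(c+d+1)²)/2)` on `U`. -/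
theorem riccati_solves_painleveVI (a b c d : ℂ) (habcd : a + b + c + d = 0)
    (U : Set ℂ) (hU : IsOpen U) (y : ℂ → ℂ)
    (hy : ∀ x ∈ U, DifferentiableAt ℂ y x)
    (hric : ∀ x ∈ U,
      x * (x - 1) * deriv y x = a * (y x) ^ 2 + (b * x + c) * y x + d * x)
    (hreg : ∀ x ∈ U, x ≠ 0 ∧ x ≠ 1 ∧ y x ≠ 0 ∧ y x ≠ 1 ∧ y x ≠ x) :
    SolvesPVI (a ^ 2 / 2) (-d ^ 2 / 2) ((b + d) ^ 2 / 2)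
      ((1 - (c + d + 1) ^ 2) / 2) U y := by
  have hD : ∀ x ∈ U, HasDerivAt (deriv y)
      ((((2 * a * y x + b * x + c) * deriv y x + b * y x + d) - (2 * x - 1) * deriv y x)
        / (x * (x - 1))) x := by
    intro x hx
    obtain ⟨h0, h1, -, -, -⟩ := hreg x hx
    have h1' : x - 1 ≠ 0 := sub_ne_zero.mpr h1
    have hyd := (hy x hx).hasDerivAt
    have hid := hasDerivAt_id' x
    have hN := (((hyd.pow 2).const_mul a).add
      (((hid.const_mul b).add_const c).mul hyd)).add (hid.const_mul d)
    have hM := hid.mul (hid.sub_const 1)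
    have hQ := hN.div hM (mul_ne_zero h0 h1')
    have hE : deriv y =ᶠ[nhds x] fun t =>
        (a * (y t) ^ 2 + (b * t + c) * y t + d * t) / (t * (t - 1)) := by
      filter_upwards [hU.mem_nhds hx] with t ht
      obtain ⟨k0, k1, -, -, -⟩ := hreg t ht
      have k1' : t - 1 ≠ 0 := sub_ne_zero.mpr k1
      rw [eq_div_iff (mul_ne_zero k0 k1'), ← hric t ht]
      ring
    have hF := hQ.congr_of_eventuallyEq hE
    refine hF.congr_deriv ?_
    have hr := hric x hx
    simp only [Pi.add_apply, Pi.mul_apply, Pi.pow_apply]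
    rw [← hr]
    field_simp
    push_cast
    ring
  refine ⟨hy, fun x hx => (hD x hx).differentiableAt, fun x hx => ?_⟩
  obtain ⟨h0, h1, hy0, hy1, hyx⟩ := hreg x hx
  refine ⟨h0, h1, hy0, hy1, hyx, ?_⟩
  rw [(hD x hx).deriv]
  have h1' : x - 1 ≠ 0 := sub_ne_zero.mpr h1
  have hy1' : y x - 1 ≠ 0 := sub_ne_zero.mpr hy1
  have hyx' : y x - x ≠ 0 := sub_ne_zero.mpr hyx
  have hr : deriv y x = (a * (y x) ^ 2 + (b * x + c) * y x + d * x) / (x * (x - 1)) := by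
    rw [eq_div_iff (mul_ne_zero h0 h1'), ← hric x hx]
    ring
  rw [hr]
  obtain rfl : c = -a - b - d := by linear_combination habcd
  generalize y x = w at *
  field_simp
  ring
end

section
/- The rational function y(x) = (1/2)·x·(42x³ − 70x² + 35x − 5) / ((2x−1)(7x²−7x+1)) solves P_VI(18, −25/2, 25/2, −4) on any open set U ⊆ ℂ on which x ≠ 0, x ≠ 1, (2x−1)(7x²−7x+1) ≠ 0, and y(x) ∉ {0, 1, x}. -/
/-- The rational function from the Example. -/
noncomputable def yEx : ℂ → ℂ := fun x =>
  (1 / 2) * (x * (42 * x ^ 3 - 70 * x ^ 2 + 35 * x - 5))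
    / ((2 * x - 1) * (7 * x ^ 2 - 7 * x + 1))

theorem yEx_hasDerivAt (x : ℂ) (h : (2 * x - 1) * (7 * x ^ 2 - 7 * x + 1) ≠ 0) :
    HasDerivAt yEx ((294 * x ^ 6 - 882 * x ^ 5 + 1057 * x ^ 4 - 644 * x ^ 3 + 210 * x ^ 2
      - 35 * x + 5 / 2) / (14 * x ^ 3 - 21 * x ^ 2 + 9 * x - 1) ^ 2) x := by
  have e : yEx = fun x : ℂ => (21 * x ^ 4 - 35 * x ^ 3 + 35 / 2 * x ^ 2 - 5 / 2 * x) /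
      (14 * x ^ 3 - 21 * x ^ 2 + 9 * x - 1) := by
    funext x
    unfold yEx
    congr 1 <;> ring
  have hD : 14 * x ^ 3 - 21 * x ^ 2 + 9 * x - 1 ≠ 0 := by
    intro h0; apply h; rw [← h0]; ring
  rw [e]
  have hn : HasDerivAt (fun x : ℂ => 21 * x ^ 4 - 35 * x ^ 3 + 35 / 2 * x ^ 2 - 5 / 2 * x)
      (84 * x ^ 3 - 105 * x ^ 2 + 35 * x - 5 / 2) x := by
    have := ((((hasDerivAt_pow 4 x).const_mul 21).sub ((hasDerivAt_pow 3 x).const_mul 35)).add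
      ((hasDerivAt_pow 2 x).const_mul (35 / 2))).sub ((hasDerivAt_id x).const_mul (5 / 2))
    refine this.congr_deriv ?_
    norm_num; ring
  have hd : HasDerivAt (fun x : ℂ => 14 * x ^ 3 - 21 * x ^ 2 + 9 * x - 1)
      (42 * x ^ 2 - 42 * x + 9) x := by
    have := ((((hasDerivAt_pow 3 x).const_mul 14).sub ((hasDerivAt_pow 2 x).const_mul 21)).add
      ((hasDerivAt_id x).const_mul 9)).sub_const 1
    refine this.congr_deriv ?_
    norm_num; ring
  refine (hn.div hd hD).congr_deriv ?_
  congr 1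
  ring

theorem yEx_hasDerivAt2 (x : ℂ) (h : 14 * x ^ 3 - 21 * x ^ 2 + 9 * x - 1 ≠ 0) :
    HasDerivAt (fun x : ℂ => (294 * x ^ 6 - 882 * x ^ 5 + 1057 * x ^ 4 - 644 * x ^ 3
      + 210 * x ^ 2 - 35 * x + 5 / 2) / (14 * x ^ 3 - 21 * x ^ 2 + 9 * x - 1) ^ 2)
      (((1764 * x ^ 5 - 4410 * x ^ 4 + 4228 * x ^ 3 - 1932 * x ^ 2 + 420 * x - 35) *
        (14 * x ^ 3 - 21 * x ^ 2 + 9 * x - 1) -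
        2 * (294 * x ^ 6 - 882 * x ^ 5 + 1057 * x ^ 4 - 644 * x ^ 3
          + 210 * x ^ 2 - 35 * x + 5 / 2) * (42 * x ^ 2 - 42 * x + 9)) /
        (14 * x ^ 3 - 21 * x ^ 2 + 9 * x - 1) ^ 3) x := by
  have hn : HasDerivAt (fun x : ℂ => 294 * x ^ 6 - 882 * x ^ 5 + 1057 * x ^ 4 - 644 * x ^ 3
      + 210 * x ^ 2 - 35 * x + 5 / 2)
      (1764 * x ^ 5 - 4410 * x ^ 4 + 4228 * x ^ 3 - 1932 * x ^ 2 + 420 * x - 35) x := by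
    have := (((((((hasDerivAt_pow 6 x).const_mul 294).sub
      ((hasDerivAt_pow 5 x).const_mul 882)).add
      ((hasDerivAt_pow 4 x).const_mul 1057)).sub ((hasDerivAt_pow 3 x).const_mul 644)).add
      ((hasDerivAt_pow 2 x).const_mul 210)).sub ((hasDerivAt_id x).const_mul 35)).add_const (5 / 2)
    refine this.congr_deriv ?_
    norm_num; ring
  have hd : HasDerivAt (fun x : ℂ => 14 * x ^ 3 - 21 * x ^ 2 + 9 * x - 1)
      (42 * x ^ 2 - 42 * x + 9) x := by
    have := ((((hasDerivAt_pow 3 x).const_mul 14).sub ((hasDerivAt_pow 2 x).const_mul 21)).add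
      ((hasDerivAt_id x).const_mul 9)).sub_const 1
    refine this.congr_deriv ?_
    norm_num; ring
  refine (hn.div (hd.pow 2) (pow_ne_zero 2 h)).congr_deriv ?_
  simp only [Pi.pow_apply]
  generalize 14 * x ^ 3 - 21 * x ^ 2 + 9 * x - 1 = D at h ⊢
  field_simp
  push_cast
  ring

/-- The algebraic identity behind the equation, with all factors named. -/
theorem pvi_algebra (x A B C D M y y1 y2 : ℂ) (hx : x ≠ 0) (hx1 : x - 1 ≠ 0)
    (hA : A ≠ 0) (hB : B ≠ 0) (hC : C ≠ 0) (hD : D ≠ 0)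
    (eA : A = 42 * x ^ 3 - 70 * x ^ 2 + 35 * x - 5)
    (eB : B = 42 * x ^ 3 - 56 * x ^ 2 + 21 * x - 2)
    (eC : C = 14 * x ^ 2 - 14 * x + 3)
    (eD : D = 14 * x ^ 3 - 21 * x ^ 2 + 9 * x - 1)
    (eM : M = 294 * x ^ 6 - 882 * x ^ 5 + 1057 * x ^ 4 - 644 * x ^ 3
          + 210 * x ^ 2 - 35 * x + 5 / 2)
    (h0 : y = x * A / (2 * D)) (h1 : y - 1 = (x - 1) * B / (2 * D))
    (h2 : y - x = x * (x - 1) * C / (2 * D)) (hy1 : y1 = M / D ^ 2)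
    (hy2 : y2 = ((1764 * x ^ 5 - 4410 * x ^ 4 + 4228 * x ^ 3 - 1932 * x ^ 2 + 420 * x - 35) * D -
        2 * M * (42 * x ^ 2 - 42 * x + 9)) / D ^ 3) :
    y2 = (1 / 2) * (1 / y + 1 / (y - 1) + 1 / (y - x)) * y1 ^ 2
        - (1 / x + 1 / (x - 1) + 1 / (y - x)) * y1
        + (y * (y - 1) * (y - x) / (x ^ 2 * (x - 1) ^ 2)) *
            (18 + (-25 / 2) * x / y ^ 2 + (25 / 2) * (x - 1) / (y - 1) ^ 2
              + (-4) * x * (x - 1) / (y - x) ^ 2) := by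
  rw [h1, h2, h0, hy1, hy2]
  generalize hz : x - 1 = z at *
  field_simp
  subst eA eB eC eD eM hz
  ring

/-- The rational function `y(x) = (1/2)·x(42x³-70x²+35x-5)/((2x-1)(7x²-7x+1))`
solves `P_VI(18, -25/2, 25/2, -4)` on any open set avoiding the singularities. -/
theorem example_solves_painleveVI (U : Set ℂ) (hU : IsOpen U)
    (hreg : ∀ x ∈ U, x ≠ 0 ∧ x ≠ 1 ∧ (2 * x - 1) * (7 * x ^ 2 - 7 * x + 1) ≠ 0 ∧
      yEx x ≠ 0 ∧ yEx x ≠ 1 ∧ yEx x ≠ x) :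
    SolvesPVI 18 (-25 / 2) (25 / 2) (-4) U yEx := by
  have hD : ∀ x ∈ U, 14 * x ^ 3 - 21 * x ^ 2 + 9 * x - 1 ≠ 0 := by
    intro x hx h0
    apply (hreg x hx).2.2.1
    rw [← h0]; ring
  have hd2 : ∀ x ∈ U, HasDerivAt (deriv yEx) _ x := fun x hx =>
    (yEx_hasDerivAt2 x (hD x hx)).congr_of_eventuallyEq (by
      filter_upwards [hU.mem_nhds hx] with z hz
      exact (yEx_hasDerivAt z (hreg z hz).2.2.1).deriv)
  refine ⟨fun x hx => (yEx_hasDerivAt x (hreg x hx).2.2.1).differentiableAt,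
    fun x hx => (hd2 x hx).differentiableAt, fun x hx => ?_⟩
  obtain ⟨hx0, hx1, hden, hy0, hy1, hyx⟩ := hreg x hx
  refine ⟨hx0, hx1, hy0, hy1, hyx, ?_⟩
  have hDx := hD x hx
  have e : yEx x = x * (42 * x ^ 3 - 70 * x ^ 2 + 35 * x - 5) /
      (2 * (14 * x ^ 3 - 21 * x ^ 2 + 9 * x - 1)) := by
    have : (2 * x - 1) * (7 * x ^ 2 - 7 * x + 1) = 14 * x ^ 3 - 21 * x ^ 2 + 9 * x - 1 := by ring
    unfold yEx
    rw [this]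
    generalize 14 * x ^ 3 - 21 * x ^ 2 + 9 * x - 1 = D at hDx ⊢
    field_simp
  have h2D : 2 * (14 * x ^ 3 - 21 * x ^ 2 + 9 * x - 1) ≠ 0 := mul_ne_zero two_ne_zero hDx
  have e1 : yEx x - 1 = (x - 1) * (42 * x ^ 3 - 56 * x ^ 2 + 21 * x - 2) /
      (2 * (14 * x ^ 3 - 21 * x ^ 2 + 9 * x - 1)) := by
    rw [e, eq_div_iff h2D, sub_mul, div_mul_cancel₀ _ h2D]; ring
  have e2 : yEx x - x = x * (x - 1) * (14 * x ^ 2 - 14 * x + 3) /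
      (2 * (14 * x ^ 3 - 21 * x ^ 2 + 9 * x - 1)) := by
    rw [e, eq_div_iff h2D, sub_mul, div_mul_cancel₀ _ h2D]; ring
  refine pvi_algebra x _ _ _ _ _ _ _ _ hx0 (sub_ne_zero.2 hx1) ?_ ?_ ?_ hDx rfl rfl rfl rfl rfl
    e e1 e2 (yEx_hasDerivAt x hden).deriv (hd2 x hx).deriv
  · intro h; apply hy0; rw [e, h]; simp
  · intro h; apply sub_ne_zero.2 hy1; rw [e1, h]; simp
  · intro h; apply sub_ne_zero.2 hyx; rw [e2, h]; simp
end

section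
/- Let k, μ, s ∈ ℂ with s not a nonpositive integer. Define y₁(x) = x·(1 + (μ(1−x)/s)·F(k+1, 1−μ, s+1, x)/F(k, −μ, s, x)). Let U ⊆ ℂ be an open subset of the unit disc {|x| < 1} on which x ≠ 0, x ≠ 1, F(k, −μ, s, x) ≠ 0, and y₁(x) ∉ {0, 1, x}. Then y₁ solves P_VI(k²/2, −(μ+s)²/2, (k−s+1)²/2, (1−μ²)/2) on U. -/
/-- The Gauss hypergeometric series `F(a, b, c, x) = Σ (a)ₙ(b)ₙ/(c)ₙ · xⁿ/n!`,
where `(a)ₙ` is the ascending Pochhammer symbol. -/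
noncomputable def hypF (a b c x : ℂ) : ℂ :=
  ∑' n : ℕ,
    ((ascPochhammer ℂ n).eval a * (ascPochhammer ℂ n).eval b / (ascPochhammer ℂ n).eval c)
      * x ^ n / (n.factorial : ℂ)

/-- The solution `y₁(k, μ, s)`. -/
noncomputable def y1 (k μ s : ℂ) : ℂ → ℂ := fun x =>
  x * (1 + (μ * (1 - x) / s) * hypF (k + 1) (1 - μ) (s + 1) x / hypF k (-μ) s x)

lemma hasSum_transfer {f g : ℕ → ℂ} {a : ℂ} (h : HasSum g a) (e : ∀ n, f n = g n) :
    HasSum f a := by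
  rwa [show f = g from funext e]

/-- Coefficients of the hypergeometric series. -/
noncomputable def hypC (a b c : ℂ) (n : ℕ) : ℂ := ordinaryHypergeometricCoefficient a b c n

lemma hypC_zero (a b c : ℂ) : hypC a b c 0 = 1 := by
  simp [hypC, ordinaryHypergeometricCoefficient]

lemma hypF_eq (a b c x : ℂ) :
    hypF a b c x = (ordinaryHypergeometricSeries ℂ a b c).sum x := by
  rw [ordinaryHypergeometric_sum_eq, hypF]
  refine tsum_congr fun n => ?_
  rw [smul_eq_mul]
  ring

lemma hyp_radius (a b c : ℂ) : 1 ≤ (ordinaryHypergeometricSeries ℂ a b c).radius := by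
  by_cases h : ∀ kn : ℕ, (kn : ℂ) ≠ -a ∧ (kn : ℂ) ≠ -b ∧ (kn : ℂ) ≠ -c
  · rw [ordinaryHypergeometricSeries_radius_eq_one (𝔸 := ℂ) a b c h]
  · push Not at h
    obtain ⟨m, hm⟩ := h
    have hcase : (m : ℂ) = -a ∨ (m : ℂ) = -b ∨ (m : ℂ) = -c := by tauto
    have : (ordinaryHypergeometricSeries ℂ a b c).radius = ⊤ := by
      apply FormalMultilinearSeries.radius_eq_top_of_eventually_eq_zero
      filter_upwards [Filter.eventually_gt_atTop m] with n hn
      exact ordinaryHypergeometricSeries_eq_zero_of_neg_nat a b c hcase hn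
    rw [this]
    exact le_top

lemma hypF_fps (a b c : ℂ) :
    HasFPowerSeriesOnBall (hypF a b c) (ordinaryHypergeometricSeries ℂ a b c) 0 1 := by
  have h1 := hyp_radius a b c
  have h := (ordinaryHypergeometricSeries ℂ a b c).hasFPowerSeriesOnBall
    (lt_of_lt_of_le one_pos h1)
  have h2 := h.mono one_pos h1
  have : hypF a b c = (ordinaryHypergeometricSeries ℂ a b c).sum := funext (hypF_eq a b c)
  rw [this]
  exact h2

lemma mem_eball {x : ℂ} (hx : ‖x‖ < 1) : x ∈ Metric.eball (0 : ℂ) 1 := by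
  rw [Metric.mem_eball, edist_zero_right]
  rw [← ofReal_norm, ENNReal.ofReal_lt_one]
  exact hx

lemma hypF_hasSum (a b c : ℂ) {x : ℂ} (hx : ‖x‖ < 1) :
    HasSum (fun n => hypC a b c n * x ^ n) (hypF a b c x) := by
  have := (hypF_fps a b c).hasSum (mem_eball hx)
  rw [zero_add] at this
  refine hasSum_transfer this fun n => ?_
  rw [ordinaryHypergeometricSeries_apply_eq, smul_eq_mul]
  rfl

lemma hypF_diff (a b c : ℂ) {x : ℂ} (hx : ‖x‖ < 1) : DifferentiableAt ℂ (hypF a b c) x :=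
  (hypF_fps a b c).differentiableOn.differentiableAt
    (Metric.isOpen_eball.mem_nhds (mem_eball hx))

lemma hypF_deriv_hasSum (a b c : ℂ) {x : ℂ} (hx : ‖x‖ < 1) :
    HasSum (fun n : ℕ => ((n : ℂ) + 1) * hypC a b c (n + 1) * x ^ n) (deriv (hypF a b c) x) := by
  have h := ((hypF_fps a b c).fderiv).hasSum (mem_eball hx)
  rw [zero_add] at h
  have h2 := h.mapL (ContinuousLinearMap.apply ℂ ℂ (1 : ℂ))
  have h3 : ContinuousLinearMap.apply ℂ ℂ (1 : ℂ) (fderiv ℂ (hypF a b c) x)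
      = deriv (hypF a b c) x := by
    simp
  rw [h3] at h2
  refine hasSum_transfer h2 fun n => ?_
  rw [FormalMultilinearSeries.apply_eq_pow_smul_coeff, ContinuousLinearMap.apply_apply,
    smul_apply, FormalMultilinearSeries.derivSeries_coeff_one]
  simp only [ordinaryHypergeometricSeries, FormalMultilinearSeries.coeff_ofScalars, hypC,
    nsmul_eq_mul, smul_eq_mul]
  push_cast
  ring

lemma poch_left (n : ℕ) (a : ℂ) : (ascPochhammer ℂ (n + 1)).eval a
    = a * (ascPochhammer ℂ n).eval (a + 1) := by
  rw [ascPochhammer_succ_left]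
  simp [Polynomial.eval_comp]

lemma poch_ne {s : ℂ} (hs : ∀ m : ℕ, s ≠ -(m : ℂ)) (n : ℕ) :
    (ascPochhammer ℂ n).eval s ≠ 0 := by
  rw [Ne, ascPochhammer_eval_eq_zero_iff]
  rintro ⟨m, -, h⟩
  exact hs m (by rw [h, neg_neg])

lemma hs_succ {s : ℂ} (hs : ∀ m : ℕ, s ≠ -(m : ℂ)) : ∀ m : ℕ, s + 1 ≠ -(m : ℂ) := by
  intro m h
  apply hs (m + 1)
  push_cast
  linear_combination h

lemma coeff_rel1 {k μ s : ℂ} (hs : ∀ m : ℕ, s ≠ -(m : ℂ)) (n : ℕ) :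
    ((n : ℂ) + 1) * hypC k (-μ) s (n + 1)
      = -(k * μ / s) * hypC (k + 1) (1 - μ) (s + 1) n := by
  have h0 : s ≠ 0 := by simpa using hs 0
  have h1 := poch_ne (hs_succ hs) n
  have hf : ((n.factorial : ℕ) : ℂ) ≠ 0 := by exact_mod_cast n.factorial_ne_zero
  have hn : (n : ℂ) + 1 ≠ 0 := by exact_mod_cast n.succ_ne_zero
  have e : -μ + 1 = 1 - μ := by ring
  simp only [hypC, ordinaryHypergeometricCoefficient, poch_left, e, Nat.factorial_succ]
  push_cast
  field_simp

lemma coeff_step {a b c : ℂ} (hc : ∀ m : ℕ, c ≠ -(m : ℂ)) (n : ℕ) :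
    ((n : ℂ) + 1) * (c + n) * hypC a b c (n + 1) = (a + n) * (b + n) * hypC a b c n := by
  have h1 := poch_ne hc n
  have h2 : c + n ≠ 0 := fun h => hc n (by linear_combination h)
  have hf : ((n.factorial : ℕ) : ℂ) ≠ 0 := by exact_mod_cast n.factorial_ne_zero
  have hn : (n : ℂ) + 1 ≠ 0 := by exact_mod_cast n.succ_ne_zero
  simp only [hypC, ordinaryHypergeometricCoefficient, ascPochhammer_succ_eval, Nat.factorial_succ]
  push_cast
  field_simp

lemma coeff_rel2 {k μ s : ℂ} (hs : ∀ m : ℕ, s ≠ -(m : ℂ)) (n : ℕ) :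
    ((n : ℂ) + 1 + s) * hypC (k + 1) (1 - μ) (s + 1) (n + 1)
      - (n + (k - μ + 1)) * hypC (k + 1) (1 - μ) (s + 1) n = s * hypC k (-μ) s (n + 1) := by
  have h0 : s ≠ 0 := by simpa using hs 0
  have hn : (n : ℂ) + 1 ≠ 0 := by exact_mod_cast n.succ_ne_zero
  have e1 := coeff_rel1 (k := k) (μ := μ) hs n
  have e2 := coeff_step (a := k + 1) (b := 1 - μ) (hs_succ hs) n
  have e3 : s * (((n : ℂ) + 1) * hypC k (-μ) s (n + 1))
      = -(k * μ) * hypC (k + 1) (1 - μ) (s + 1) n := by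
    rw [e1]; field_simp
  apply mul_left_cancel₀ hn
  linear_combination e2 - e3

lemma deriv_f {k μ s : ℂ} (hs : ∀ m : ℕ, s ≠ -(m : ℂ)) {x : ℂ} (hx : ‖x‖ < 1) :
    deriv (hypF k (-μ) s) x = -(k * μ / s) * hypF (k + 1) (1 - μ) (s + 1) x := by
  have h1 := hypF_deriv_hasSum k (-μ) s hx
  have h2 := (hypF_hasSum (k + 1) (1 - μ) (s + 1) hx).mul_left (-(k * μ / s))
  refine h1.unique ?_
  refine hasSum_transfer h2 fun n => ?_
  rw [coeff_rel1 hs n]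
  ring

lemma deriv_g {k μ s : ℂ} (hs : ∀ m : ℕ, s ≠ -(m : ℂ)) {x : ℂ} (hx : ‖x‖ < 1) :
    x * (1 - x) * deriv (hypF (k + 1) (1 - μ) (s + 1)) x
      = s * hypF k (-μ) s x - (s - (k - μ + 1) * x) * hypF (k + 1) (1 - μ) (s + 1) x := by
  have hA := hypF_hasSum k (-μ) s hx
  have hB := hypF_hasSum (k + 1) (1 - μ) (s + 1) hx
  have hD := hypF_deriv_hasSum (k + 1) (1 - μ) (s + 1) hx
  have hA1 := (hasSum_nat_add_iff' 1).2 hA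
  have hB1 := (hasSum_nat_add_iff' 1).2 hB
  simp only [Finset.sum_range_one, hypC_zero, pow_zero, mul_one] at hA1 hB1
  have hD1 := hD.mul_left x
  have hN : HasSum (fun n : ℕ => (n : ℂ) * hypC (k + 1) (1 - μ) (s + 1) n * x ^ n)
      (x * deriv (hypF (k + 1) (1 - μ) (s + 1)) x) := by
    rw [← hasSum_nat_add_iff' 1]
    simp only [Finset.sum_range_one, Nat.cast_zero, zero_mul, sub_zero]
    refine hasSum_transfer hD1 fun n => ?_
    push_cast
    ring
  have hN1 := hN.mul_left x
  have hBx := hB.mul_left x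
  have hL := ((hD1.sub hN1).add (hB1.mul_left s)).sub (hBx.mul_left (k - μ + 1))
  have hR := hA1.mul_left s
  have key := hL.unique (a₂ := s * (hypF k (-μ) s x - 1)) (by
    refine hasSum_transfer hR fun n => ?_
    linear_combination x ^ (n + 1) * coeff_rel2 (k := k) (μ := μ) hs n)
  linear_combination key

lemma pvi_alg (k μ s x y p q : ℂ) (hx : x ≠ 0) (hx1 : x - 1 ≠ 0) (hy : y ≠ 0) (hy1 : y - 1 ≠ 0)
    (hyx : y - x ≠ 0)
    (hp : p = (k * y ^ 2 + (1 - s - (k + μ + 1) * x) * y + (μ + s) * x) / (x * (1 - x)))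
    (hq : q = (2 * k * y * p + (1 - s - (k + μ + 1) * x) * p - (k + μ + 1) * y + (μ + s)
      - (1 - 2 * x) * p) / (x * (1 - x))) :
    q = (1 / 2) * (1 / y + 1 / (y - 1) + 1 / (y - x)) * p ^ 2
        - (1 / x + 1 / (x - 1) + 1 / (y - x)) * p
        + (y * (y - 1) * (y - x) / (x ^ 2 * (x - 1) ^ 2)) *
            ((k ^ 2 / 2) + (-(μ + s) ^ 2 / 2) * x / y ^ 2
              + ((k - s + 1) ^ 2 / 2) * (x - 1) / (y - 1) ^ 2
              + ((1 - μ ^ 2) / 2) * x * (x - 1) / (y - x) ^ 2) := by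
  have e : x * (1 - x) = -(x * (x - 1)) := by ring
  rw [e] at hp hq
  subst hq
  subst hp
  field_simp
  ring

lemma y1_riccati {k μ s : ℂ} (hs : ∀ m : ℕ, s ≠ -(m : ℂ)) {x : ℂ} (hx : ‖x‖ < 1)
    (hx0 : x ≠ 0) (hx1 : x ≠ 1) (hf : hypF k (-μ) s x ≠ 0) :
    HasDerivAt (y1 k μ s) ((k * (y1 k μ s x) ^ 2 + (1 - s - (k + μ + 1) * x) * y1 k μ s x
      + (μ + s) * x) / (x * (1 - x))) x := by
  have h0 : s ≠ 0 := by simpa using hs 0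
  have h1x : 1 - x ≠ 0 := sub_ne_zero.2 (Ne.symm hx1)
  have hF := (hypF_diff k (-μ) s hx).hasDerivAt
  have hG := (hypF_diff (k + 1) (1 - μ) (s + 1) hx).hasDerivAt
  have eg := deriv_g (k := k) (μ := μ) hs hx
  rw [deriv_f hs hx] at hF
  have eg' : deriv (hypF (k + 1) (1 - μ) (s + 1)) x = (s * hypF k (-μ) s x
      - (s - (k - μ + 1) * x) * hypF (k + 1) (1 - μ) (s + 1) x) / (x * (1 - x)) := by
    rw [eq_div_iff (mul_ne_zero hx0 h1x), ← eg]; ring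
  rw [eg'] at hG
  have hl : HasDerivAt (fun z : ℂ => μ * (1 - z) / s) (μ * (-1) / s) x :=
    (((hasDerivAt_id x).const_sub 1).const_mul μ).div_const s
  have H := (hasDerivAt_id x).mul (((hl.mul hG).div hF hf).const_add 1)
  have H' : HasDerivAt (y1 k μ s) _ x := H
  refine H'.congr_deriv ?_
  simp only [y1, id, Pi.mul_apply, Pi.div_apply]
  generalize hypF k (-μ) s x = F at *
  generalize hypF (k + 1) (1 - μ) (s + 1) x = G at *
  field_simp
  ring

/-- **First case** `a = -k`: the function
`y₁(x) = x(1 + (μ(1-x)/s)·F(k+1, 1-μ, s+1, x)/F(k, -μ, s, x))`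
solves `P_VI(k²/2, -(μ+s)²/2, (k-s+1)²/2, (1-μ²)/2)`. -/
theorem y1_solves_painleveVI (k μ s : ℂ) (hs : ∀ m : ℕ, s ≠ -(m : ℂ))
    (U : Set ℂ) (hU : IsOpen U) (hUball : U ⊆ Metric.ball (0 : ℂ) 1)
    (hreg : ∀ x ∈ U, x ≠ 0 ∧ x ≠ 1 ∧ hypF k (-μ) s x ≠ 0 ∧
      y1 k μ s x ≠ 0 ∧ y1 k μ s x ≠ 1 ∧ y1 k μ s x ≠ x) :
    SolvesPVI (k ^ 2 / 2) (-(μ + s) ^ 2 / 2) ((k - s + 1) ^ 2 / 2)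
      ((1 - μ ^ 2) / 2) U (y1 k μ s) := by
  have hR : ∀ x ∈ U, HasDerivAt (y1 k μ s) ((k * (y1 k μ s x) ^ 2
      + (1 - s - (k + μ + 1) * x) * y1 k μ s x + (μ + s) * x) / (x * (1 - x))) x := by
    intro x hx
    obtain ⟨h0, h1, hf, -⟩ := hreg x hx
    exact y1_riccati hs (by simpa using hUball hx) h0 h1 hf
  have hR2 : ∀ x ∈ U, HasDerivAt (deriv (y1 k μ s))
      ((2 * k * y1 k μ s x * deriv (y1 k μ s) x
        + (1 - s - (k + μ + 1) * x) * deriv (y1 k μ s) x - (k + μ + 1) * y1 k μ s x + (μ + s)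
      - (1 - 2 * x) * deriv (y1 k μ s) x) / (x * (1 - x))) x := by
    intro x hx
    obtain ⟨h0, h1, hf, -⟩ := hreg x hx
    have h1x : 1 - x ≠ 0 := sub_ne_zero.2 (Ne.symm h1)
    have hev : deriv (y1 k μ s) =ᶠ[nhds x] fun z => (k * (y1 k μ s z) ^ 2
      + (1 - s - (k + μ + 1) * z) * y1 k μ s z + (μ + s) * z) / (z * (1 - z)) := by
      filter_upwards [hU.mem_nhds hx] with z hz using (hR z hz).deriv
    have hy := hR x hx
    have hp := hy.deriv
    rw [← hp] at hy
    generalize y1 k μ s = Y at *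
    have hid := hasDerivAt_id' x
    have hn := (((hy.pow 2).const_mul k).add
      (((hid.const_mul (k + μ + 1)).const_sub (1 - s)).mul hy)).add (hid.const_mul (μ + s))
    have hd := hid.mul (hid.const_sub 1)
    have hq := hn.div hd (mul_ne_zero h0 h1x)
    refine (HasDerivAt.congr_of_eventuallyEq (f := fun z => (k * (Y z) ^ 2
      + (1 - s - (k + μ + 1) * z) * Y z + (μ + s) * z) / (z * (1 - z))) ?_ hev)
    refine HasDerivAt.congr_deriv hq ?_
    simp only [Pi.mul_apply, Pi.add_apply, Pi.pow_apply]
    rw [eq_div_iff (mul_ne_zero h0 h1x)] at hp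
    generalize deriv Y x = p at *
    field_simp
    linear_combination (1 - 2 * x) * hp
  refine ⟨fun x hx => (hR x hx).differentiableAt, fun x hx => (hR2 x hx).differentiableAt, ?_⟩
  intro x hx
  obtain ⟨h0, h1, hf, hy0, hy1, hyx⟩ := hreg x hx
  refine ⟨h0, h1, hy0, hy1, hyx, ?_⟩
  exact pvi_alg k μ s x _ _ _ h0 (sub_ne_zero.2 h1) hy0 (sub_ne_zero.2 hy1) (sub_ne_zero.2 hyx)
    (hR x hx).deriv (hR2 x hx).deriv
end

section
/- Let k, μ, s ∈ ℂ with s not a nonpositive integer and μ + s ≠ 0. Define y₂(x) = (k·x/(μ+s))·(1 + (μ(1−x)/s)·F(k+1, 1−μ, s+1, x)/F(k, −μ, s, x)). Let U ⊆ ℂ be an open subset of the unit disc {|x| < 1} on which x ≠ 0, x ≠ 1, F(k, −μ, s, x) ≠ 0, and y₂(x) ∉ {0, 1, x}. Then y₂ solves P_VI((μ+s)²/2, −k²/2, (μ+1)²/2, (1−(k−s)²)/2) on U. -/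
/-- The solution `y₂(k, μ, s)`. -/
noncomputable def y2 (k μ s : ℂ) : ℂ → ℂ := fun x =>
  (k * x / (μ + s)) *
    (1 + (μ * (1 - x) / s) * hypF (k + 1) (1 - μ) (s + 1) x / hypF k (-μ) s x)

open Filter Topology

/-- The coefficients satisfy a first-order recurrence with ratio tending to `1`. -/
def RatioOne (c : ℕ → ℂ) : Prop :=
  ∃ q : ℕ → ℂ, Tendsto q atTop (𝓝 1) ∧ ∀ n, c (n + 1) = q n * c n

/-- Coefficients of the derived series. -/
def dcoef (c : ℕ → ℂ) : ℕ → ℂ := fun n => ((n : ℂ) + 1) * c (n + 1)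

lemma tendsto_shift_ratio (a b : ℂ) :
    Tendsto (fun n : ℕ => ((n : ℂ) + a) / ((n : ℂ) + b)) atTop (𝓝 1) := by
  have h0 : ∀ d : ℂ, Tendsto (fun n : ℕ => 1 + d * ((n : ℂ))⁻¹) atTop (𝓝 1) := by
    intro d
    have := (tendsto_inv_atTop_nhds_zero_nat (𝕜 := ℂ)).const_mul d
    simpa using this.const_add 1
  have h := (h0 a).div (h0 b) one_ne_zero
  rw [div_one] at h
  refine h.congr' ?_
  filter_upwards [eventually_gt_atTop 0] with n hn
  have hn' : (n : ℂ) ≠ 0 := by exact_mod_cast hn.ne'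
  simp only [Pi.div_apply]
  rw [← mul_div_mul_left _ _ hn']
  congr 1 <;> field_simp

lemma RatioOne.dcoef {c : ℕ → ℂ} (h : RatioOne c) : RatioOne (dcoef c) := by
  obtain ⟨q, hq, hc⟩ := h
  refine ⟨fun n => ((n : ℂ) + 2) / ((n : ℂ) + 1) * q (n + 1), ?_, ?_⟩
  · simpa using (tendsto_shift_ratio 2 1).mul (hq.comp (tendsto_add_atTop_nat 1))
  · intro n
    have : (n : ℂ) + 1 ≠ 0 := by exact_mod_cast n.succ_ne_zero
    simp only [_root_.dcoef]
    rw [hc (n + 1)]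
    push_cast
    field_simp
    ring

lemma RatioOne.summable_norm {c : ℕ → ℂ} (h : RatioOne c) {r : ℝ} (h0 : 0 ≤ r) (h1 : r < 1) :
    Summable (fun n => ‖c n‖ * r ^ n) := by
  obtain ⟨q, hq, hc⟩ := h
  obtain ⟨t, hrt, ht⟩ := exists_between h1
  have hq' : Tendsto (fun n => ‖q n‖ * r) atTop (𝓝 r) := by
    simpa using hq.norm.mul_const r
  refine summable_of_ratio_norm_eventually_le ht ?_
  filter_upwards [hq'.eventually (gt_mem_nhds hrt)] with n hn
  rw [Real.norm_of_nonneg (by positivity), Real.norm_of_nonneg (by positivity), hc n,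
    norm_mul, pow_succ]
  calc ‖q n‖ * ‖c n‖ * (r ^ n * r) = (‖q n‖ * r) * (‖c n‖ * r ^ n) := by ring
    _ ≤ t * (‖c n‖ * r ^ n) := by gcongr

lemma RatioOne.summable {c : ℕ → ℂ} (h : RatioOne c) {x : ℂ} (h1 : ‖x‖ < 1) :
    Summable (fun n => c n * x ^ n) := by
  refine Summable.of_norm ?_
  simpa using h.summable_norm (norm_nonneg x) h1

lemma RatioOne.hasDerivAt {c : ℕ → ℂ} (h : RatioOne c) {x : ℂ} (hx : ‖x‖ < 1) :
    HasDerivAt (fun z => ∑' n, c n * z ^ n) (∑' n, _root_.dcoef c n * x ^ n) x := by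
  obtain ⟨r, hxr, hr⟩ := exists_between hx
  have hr0 : 0 < r := (norm_nonneg x).trans_lt hxr
  have key : HasDerivAt (fun z => ∑' n, c (n + 1) * z ^ (n + 1))
      (∑' n, _root_.dcoef c n * x ^ n) x := by
    refine hasDerivAt_tsum_of_isPreconnected (F := ℂ)
      (g := fun (n : ℕ) (z : ℂ) => c (n + 1) * z ^ (n + 1))
      (g' := fun (n : ℕ) (z : ℂ) => _root_.dcoef c n * z ^ n) (u := fun n => ‖_root_.dcoef c n‖ * r ^ n)
      (t := Metric.ball (0 : ℂ) r) (y₀ := 0)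
      (h.dcoef.summable_norm hr0.le hr) Metric.isOpen_ball
      (convex_ball (0 : ℂ) r).isPreconnected ?_ ?_ ?_ ?_ ?_
    · intro n y _
      have := ((hasDerivAt_id y).pow (n + 1)).const_mul (c (n + 1))
      refine this.congr_deriv ?_
      simp [_root_.dcoef]
      ring
    · intro n y hy
      rw [norm_mul, norm_pow]
      have : ‖y‖ ≤ r := by simpa using (Metric.mem_ball.1 hy).le
      gcongr
    · simpa using hr0
    · simp
    · simpa using hxr
  refine (key.const_add (c 0)).congr_of_eventuallyEq ?_
  filter_upwards [Metric.isOpen_ball.mem_nhds (show x ∈ Metric.ball (0 : ℂ) 1 by simpa using hx)]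
    with z hz
  have hz' : ‖z‖ < 1 := by simpa using hz
  rw [(h.summable hz').tsum_eq_zero_add]
  simp

/-- Taylor coefficients of the hypergeometric series. -/
noncomputable def hcoef (a b c : ℂ) (n : ℕ) : ℂ :=
  (ascPochhammer ℂ n).eval a * (ascPochhammer ℂ n).eval b / (ascPochhammer ℂ n).eval c
    / (n.factorial : ℂ)

lemma hypF_eq_s5 (a b c x : ℂ) : hypF a b c x = ∑' n, hcoef a b c n * x ^ n := by
  unfold hypF hcoef
  refine tsum_congr fun n => ?_
  ring

lemma hcoef_succ (a b c : ℂ) (n : ℕ) :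
    hcoef a b c (n + 1) =
      (((n : ℂ) + a) / ((n : ℂ) + 1)) * (((n : ℂ) + b) / ((n : ℂ) + c)) * hcoef a b c n := by
  unfold hcoef
  simp only [ascPochhammer_succ_eval, Nat.factorial_succ, Nat.cast_mul, Nat.cast_succ]
  simp only [div_eq_mul_inv, mul_inv]
  rw [add_comm a, add_comm b, add_comm c]
  ring

lemma hcoef_ratioOne (a b c : ℂ) : RatioOne (hcoef a b c) := by
  refine ⟨_, ?_, hcoef_succ a b c⟩
  simpa using (tendsto_shift_ratio a 1).mul (tendsto_shift_ratio b c)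

lemma eval_asc_left (a : ℂ) (n : ℕ) :
    (ascPochhammer ℂ (n + 1)).eval a = a * (ascPochhammer ℂ n).eval (a + 1) := by
  rw [ascPochhammer_succ_left]
  simp

lemma dcoef_hcoef (a b c : ℂ) (n : ℕ) :
    dcoef (hcoef a b c) n = a * b / c * hcoef (a + 1) (b + 1) (c + 1) n := by
  have : (n : ℂ) + 1 ≠ 0 := by exact_mod_cast n.succ_ne_zero
  unfold dcoef hcoef
  simp only [eval_asc_left, Nat.factorial_succ, Nat.cast_mul, Nat.cast_succ]
  simp only [div_eq_mul_inv, mul_inv]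
  field_simp

lemma hypF_hasDerivAt (a b c : ℂ) {x : ℂ} (hx : ‖x‖ < 1) :
    HasDerivAt (hypF a b c) (a * b / c * hypF (a + 1) (b + 1) (c + 1) x) x := by
  have h := (hcoef_ratioOne a b c).hasDerivAt hx
  have e : hypF a b c = fun z => ∑' n, hcoef a b c n * z ^ n := funext (hypF_eq_s5 a b c)
  rw [e, hypF_eq_s5, ← tsum_mul_left]
  refine h.congr_deriv (tsum_congr fun n => ?_)
  rw [dcoef_hcoef]
  ring

/-- The hypergeometric equation. -/
lemma hypF_ode (a b c : ℂ) (hc : ∀ m : ℕ, c ≠ -(m : ℂ)) {x : ℂ} (hx : ‖x‖ < 1) :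
    ∃ F2 : ℂ, HasDerivAt (fun z => a * b / c * hypF (a + 1) (b + 1) (c + 1) z) F2 x ∧
      x * (1 - x) * F2 + (c - (a + b + 1) * x) * (a * b / c * hypF (a + 1) (b + 1) (c + 1) x)
        = a * b * hypF a b c x := by
  have hR := hcoef_ratioOne a b c
  have e : ∀ z, a * b / c * hypF (a + 1) (b + 1) (c + 1) z
      = ∑' n, dcoef (hcoef a b c) n * z ^ n := by
    intro z
    rw [hypF_eq_s5, ← tsum_mul_left]
    refine tsum_congr fun n => ?_
    rw [dcoef_hcoef]
    ring
  refine ⟨∑' n, dcoef (dcoef (hcoef a b c)) n * x ^ n, ?_, ?_⟩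
  · rw [funext e]
    exact hR.dcoef.hasDerivAt hx
  · rw [e x, hypF_eq_s5]
    set u := hcoef a b c with hu
    have s0 := (hR.summable hx).hasSum
    have s1 := (hR.dcoef.summable hx).hasSum
    have s2 := (hR.dcoef.dcoef.summable hx).hasSum
    set A := ∑' n, u n * x ^ n
    set B := ∑' n, dcoef u n * x ^ n
    set C := ∑' n, dcoef (dcoef u) n * x ^ n
    -- multiplication by `x`
    have shift : ∀ (v : ℕ → ℂ) (V : ℂ), HasSum (fun n => dcoef v n * x ^ n) V →
        HasSum (fun n : ℕ => (n : ℂ) * v n * x ^ n) (x * V) := by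
      intro v V hV
      rw [← hasSum_nat_add_iff' 1]
      simp only [Finset.range_one, Finset.sum_singleton, Nat.cast_zero, zero_mul, sub_zero]
      refine (hV.mul_left x).congr_fun ?_ 
      intro n
      simp only [dcoef]
      push_cast
      ring
    have t1 := shift _ _ s1
    have t2 := shift _ _ s2
    have t3 : HasSum (fun n : ℕ => (n : ℂ) * ((n : ℂ) - 1) * u n * x ^ n) (x * (x * C)) := by
      rw [← hasSum_nat_add_iff' 1]
      simp only [Finset.range_one, Finset.sum_singleton, Nat.cast_zero, zero_mul, sub_zero]
      refine (t2.mul_left x).congr_fun ?_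
      intro n
      simp only [dcoef]
      push_cast
      ring
    have tot := (((t2.sub t3).add (s1.mul_left c)).sub (t1.mul_left (a + b + 1))).sub
      (s0.mul_left (a * b))
    have z : ∀ n : ℕ, (n : ℂ) * dcoef u n * x ^ n - (n : ℂ) * ((n : ℂ) - 1) * u n * x ^ n
        + c * (dcoef u n * x ^ n) - (a + b + 1) * ((n : ℂ) * u n * x ^ n)
        - a * b * (u n * x ^ n) = 0 := by
      intro n
      have h1 : (n : ℂ) + 1 ≠ 0 := by exact_mod_cast n.succ_ne_zero
      have h2 : (n : ℂ) + c ≠ 0 := fun h => hc n (by linear_combination h)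
      have h3 : ((n : ℂ) + 1) * ((n : ℂ) + c) * u (n + 1)
          = ((n : ℂ) + a) * ((n : ℂ) + b) * u n := by
        rw [hu, hcoef_succ]
        field_simp
      simp only [dcoef]
      linear_combination x ^ n * h3
    simp only [z] at tot
    have := tot.unique hasSum_zero
    linear_combination this

/-- **Second case** `a = -(μ+s)`: the function
`y₂(x) = (kx/(μ+s))(1 + (μ(1-x)/s)·F(k+1, 1-μ, s+1, x)/F(k, -μ, s, x))`
solves `P_VI((μ+s)²/2, -k²/2, (μ+1)²/2, (1-(k-s)²)/2)`. -/
theorem y2_solves_painleveVI (k μ s : ℂ) (hs : ∀ m : ℕ, s ≠ -(m : ℂ))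
    (hμs : μ + s ≠ 0)
    (U : Set ℂ) (hU : IsOpen U) (hUball : U ⊆ Metric.ball (0 : ℂ) 1)
    (hreg : ∀ x ∈ U, x ≠ 0 ∧ x ≠ 1 ∧ hypF k (-μ) s x ≠ 0 ∧
      y2 k μ s x ≠ 0 ∧ y2 k μ s x ≠ 1 ∧ y2 k μ s x ≠ x) :
    SolvesPVI ((μ + s) ^ 2 / 2) (-k ^ 2 / 2) ((μ + 1) ^ 2 / 2)
      ((1 - (k - s) ^ 2) / 2) U (y2 k μ s) := by
  have hs0 : s ≠ 0 := by simpa using hs 0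
  set y := y2 k μ s with hy
  set R : ℂ → ℂ := fun x =>
    ((μ + s) * y x ^ 2 + ((1 - s) - (1 + k + μ) * x) * y x + k * x) / (x * (1 - x)) with hR
  -- the Riccati equation
  have ric : ∀ x ∈ U, HasDerivAt y (R x) x := by
    intro x hx
    obtain ⟨hx0, hx1, hF, -⟩ := hreg x hx
    have hx1' : 1 - x ≠ 0 := sub_ne_zero.2 hx1.symm
    have hn : ‖x‖ < 1 := by simpa using hUball hx
    have dF := hypF_hasDerivAt k (-μ) s hn
    obtain ⟨F2, dF2, ode⟩ := hypF_ode k (-μ) s hs hn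
    have ey : y = fun z => z / (μ + s) *
        (k - (1 - z) * (k * -μ / s * hypF (k + 1) (-μ + 1) (s + 1) z) / hypF k (-μ) s z) := by
      funext z
      rw [hy, y2, show (1 : ℂ) - μ = -μ + 1 by ring]
      ring
    have hyx := congrFun ey x
    have d := ((hasDerivAt_id x).div_const (μ + s)).mul
      (((((hasDerivAt_id x).const_sub 1).mul dF2).div dF hF).const_sub k)
    rw [ey]
    refine d.congr_deriv ?_
    rw [hR]
    simp only [id, Pi.mul_apply, Pi.div_apply]
    rw [hyx]
    generalize k * -μ / s * hypF (k + 1) (-μ + 1) (s + 1) x = G at *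
    generalize hypF k (-μ) s x = F at *
    have hF2 : F2 = (k * -μ * F - (s - (k + -μ + 1) * x) * G) / (x * (1 - x)) := by
      field_simp
      linear_combination ode
    rw [hF2]
    field_simp
    ring
  have dR : ∀ x ∈ U, HasDerivAt R
      (((2 * (μ + s) * y x * R x - (1 + k + μ) * y x + ((1 - s) - (1 + k + μ) * x) * R x + k)
        - R x * (1 - 2 * x)) / (x * (1 - x))) x := by
    intro x hx
    obtain ⟨hx0, hx1, -⟩ := hreg x hx
    have hx1' : 1 - x ≠ 0 := sub_ne_zero.2 hx1.symm
    have d := ((((ric x hx).pow 2).const_mul (μ + s)).add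
      ((((hasDerivAt_id x).const_mul (1 + k + μ)).const_sub (1 - s)).mul (ric x hx))).add
      ((hasDerivAt_id x).const_mul k)
    have d2 := d.div ((hasDerivAt_id x).mul ((hasDerivAt_id x).const_sub 1))
      (mul_ne_zero hx0 hx1')
    refine d2.congr_deriv ?_
    have e : (μ + s) * y x ^ 2 + ((1 - s) - (1 + k + μ) * x) * y x + k * x
        = R x * (x * (1 - x)) := by
      simp only [hR]
      field_simp
    simp only [id, Pi.mul_apply, Pi.add_apply, Pi.pow_apply]
    rw [e]
    generalize R x = r
    field_simp
    push_cast
    ring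
  have deq : ∀ x ∈ U, deriv y =ᶠ[𝓝 x] R := by
    intro x hx
    filter_upwards [hU.mem_nhds hx] with z hz using (ric z hz).deriv
  refine ⟨fun x hx => (ric x hx).differentiableAt, fun x hx =>
    ((deq x hx).differentiableAt_iff).2 (dR x hx).differentiableAt, fun x hx => ?_⟩
  obtain ⟨hx0, hx1, -, hy0, hy1, hyx⟩ := hreg x hx
  refine ⟨hx0, hx1, hy0, hy1, hyx, ?_⟩
  rw [(deq x hx).deriv_eq, (dR x hx).deriv, (ric x hx).deriv]
  simp only [hR]
  generalize y x = w at *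
  have h1 : x - 1 ≠ 0 := sub_ne_zero.2 hx1
  have h2 : w - 1 ≠ 0 := sub_ne_zero.2 hy1
  have h3 : w - x ≠ 0 := sub_ne_zero.2 hyx
  rw [show 1 - x = -(x - 1) by ring]
  field_simp
  ring
end

section
/- Let β, γ ∈ ℂ and let U ⊆ ℂ be an open set. Suppose y : ℂ → ℂ is twice differentiable on U, satisfies (y'(x))² = (2(y(x)−x)²/(x²(x−1)²))·((β+γ)·y(x) − β) for all x ∈ U, and for every x ∈ U one has x ≠ 0, x ≠ 1, y(x) ∉ {0, 1, x}, and y'(x) ≠ (y(x)−x)·(2y(x)−1)/(x(x−1))·0 + 0 is not required—only additionally assume y'(x) is such that the first-order relation can be differentiated, i.e. (β+γ)y(x) − β ≠ 0. Then y solves P_VI(0, β, γ, 0) on U. -/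
/-- **The case `α = δ = 0`** (Garnier, Gromak–Lukashevich): if `y` satisfies
`(y')² = (2(y-x)²/(x²(x-1)²))((β+γ)y - β)` on an open set `U` (with the indicated
nondegeneracy conditions), then `y` solves `P_VI(0, β, γ, 0)` on `U`. -/
theorem firstOrder_solves_painleveVI (β γ : ℂ) (U : Set ℂ) (hU : IsOpen U)
    (y : ℂ → ℂ)
    (hy1 : ∀ x ∈ U, DifferentiableAt ℂ y x)
    (hy2 : ∀ x ∈ U, DifferentiableAt ℂ (deriv y) x)
    (heq : ∀ x ∈ U, (deriv y x) ^ 2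
      = (2 * (y x - x) ^ 2 / (x ^ 2 * (x - 1) ^ 2)) * ((β + γ) * y x - β))
    (hreg : ∀ x ∈ U, x ≠ 0 ∧ x ≠ 1 ∧ y x ≠ 0 ∧ y x ≠ 1 ∧ y x ≠ x ∧
      (β + γ) * y x - β ≠ 0) :
    SolvesPVI 0 β γ 0 U y := by
  refine ⟨hy1, hy2, fun x hx => ?_⟩
  obtain ⟨h0, h1, hy0, hy1', hyx, hL⟩ := hreg x hx
  refine ⟨h0, h1, hy0, hy1', hyx, ?_⟩
  have hd1 : HasDerivAt y (deriv y x) x := (hy1 x hx).hasDerivAt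
  have hd2 : HasDerivAt (deriv y) (deriv (deriv y) x) x := (hy2 x hx).hasDerivAt
  have hpoly : ∀ z ∈ U, (deriv y z) ^ 2 * (z * (z - 1)) ^ 2
      = 2 * (y z - z) ^ 2 * ((β + γ) * y z - β) := by
    intro z hz
    obtain ⟨k0, k1, -⟩ := hreg z hz
    have k1' : z - 1 ≠ 0 := sub_ne_zero.mpr k1
    rw [heq z hz]
    field_simp
  have hid : HasDerivAt (fun z : ℂ => z) 1 x := hasDerivAt_id' x
  have hl := (hd2.pow 2).mul ((hid.mul (hid.sub_const 1)).pow 2)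
  have hr := (((hd1.sub hid).pow 2).const_mul 2).mul ((hd1.const_mul (β + γ)).sub_const β)
  have hev := Filter.eventuallyEq_of_mem (hU.mem_nhds hx) hpoly
  have hD := hl.unique (hr.congr_of_eventuallyEq hev)
  have hP := hpoly x hx
  have hE := heq x hx
  simp only [Pi.mul_apply, Pi.pow_apply, Pi.sub_apply] at hD
  norm_num at hD
  generalize deriv (deriv y) x = q at *
  generalize deriv y x = p at *
  generalize y x = w at *
  have h1' : x - 1 ≠ 0 := sub_ne_zero.mpr h1
  have hw1 : w - 1 ≠ 0 := sub_ne_zero.mpr hy1'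
  have hwx : w - x ≠ 0 := sub_ne_zero.mpr hyx
  have hp : p ≠ 0 := by
    rintro rfl
    have : 2 * (w - x) ^ 2 * ((β + γ) * w - β) ≠ 0 :=
      mul_ne_zero (mul_ne_zero two_ne_zero (pow_ne_zero 2 hwx)) hL
    exact this (by rw [← hP]; ring)
  have hA : q = p ^ 2 / (w - x) - (1 / x + 1 / (x - 1) + 1 / (w - x)) * p
      + (β + γ) * (w - x) ^ 2 / (x ^ 2 * (x - 1) ^ 2) := by
    have hc : 2 * p ≠ 0 := mul_ne_zero two_ne_zero hp
    field_simp
    apply mul_left_cancel₀ hc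
    linear_combination (w - x) * hD - 2 * (p - 1) * hP
  rw [hA]
  have key : p ^ 2 / (w - x) - (1 / 2) * (1 / w + 1 / (w - 1) + 1 / (w - x)) * p ^ 2
     = (w * (w - 1) * (w - x) / (x ^ 2 * (x - 1) ^ 2)) *
      (β * x / w ^ 2 + γ * (x - 1) / (w - 1) ^ 2)
      - (β + γ) * (w - x) ^ 2 / (x ^ 2 * (x - 1) ^ 2) := by
    rw [hE]
    field_simp
    ring
  linear_combination key
end

section
/- Let β, γ ∈ ℂ with β + γ ≠ 0, and let U ⊆ ℂ be an open set on which x ≠ 0 and x ≠ 1. Suppose u : ℂ → ℂ is twice differentiable on U, u(x) ≠ 0 on U, and u satisfies u''(x) + ((2x−1)/(x(x−1)))·u'(x) − (1/(x²(x−1)²))·((β+γ)x/2 − β/2)·u(x) = 0 on U. Then the function y(x) = β/(β+γ) + 2x²(x−1)²·(u'(x))²/((β+γ)·u(x)²) satisfies (y'(x))² = (2(y(x)−x)²/(x²(x−1)²))·((β+γ)·y(x) − β) for all x ∈ U. -/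
/-- Linearization in the case `α = δ = 0`: if `u` is a nonvanishing twice
differentiable solution of
`u'' + ((2x-1)/(x(x-1))) u' - (1/(x²(x-1)²))((β+γ)x/2 - β/2) u = 0` on `U`,
then `y = β/(β+γ) + 2x²(x-1)²(u')²/((β+γ)u²)` satisfies
`(y')² = (2(y-x)²/(x²(x-1)²))((β+γ)y - β)` on `U`. -/
theorem linear_to_firstOrder (β γ : ℂ) (hβγ : β + γ ≠ 0)
    (U : Set ℂ) (hU : IsOpen U) (hreg : ∀ x ∈ U, x ≠ 0 ∧ x ≠ 1)
    (u : ℂ → ℂ) (hu1 : ∀ x ∈ U, DifferentiableAt ℂ u x)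
    (hu2 : ∀ x ∈ U, DifferentiableAt ℂ (deriv u) x)
    (hune : ∀ x ∈ U, u x ≠ 0)
    (heq : ∀ x ∈ U,
      deriv (deriv u) x + ((2 * x - 1) / (x * (x - 1))) * deriv u x
        - (1 / (x ^ 2 * (x - 1) ^ 2)) * ((β + γ) * x / 2 - β / 2) * u x = 0) :
    ∀ x ∈ U,
      (deriv (fun z =>
          β / (β + γ) + 2 * z ^ 2 * (z - 1) ^ 2 * (deriv u z) ^ 2
            / ((β + γ) * (u z) ^ 2)) x) ^ 2
        = (2 * ((β / (β + γ) + 2 * x ^ 2 * (x - 1) ^ 2 * (deriv u x) ^ 2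
              / ((β + γ) * (u x) ^ 2)) - x) ^ 2 / (x ^ 2 * (x - 1) ^ 2)) *
            ((β + γ) * (β / (β + γ) + 2 * x ^ 2 * (x - 1) ^ 2 * (deriv u x) ^ 2
              / ((β + γ) * (u x) ^ 2)) - β) := by
  intro x hx
  obtain ⟨h0, h1⟩ := hreg x hx
  have h1' : x - 1 ≠ 0 := sub_ne_zero.mpr h1
  have hux := hune x hx
  have he := heq x hx
  have hfun : (fun z => β / (β + γ) + 2 * z ^ 2 * (z - 1) ^ 2 * (deriv u z) ^ 2
      / ((β + γ) * (u z) ^ 2))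
      = fun z => β / (β + γ) + 2 / (β + γ) * (z * (z - 1) * deriv u z / u z) ^ 2 := by
    funext z
    simp only [div_eq_mul_inv, mul_inv, mul_pow, inv_pow]
    ring
  have hd1 := (hu1 x hx).hasDerivAt
  have hd2 := (hu2 x hx).hasDerivAt
  have hp := (((hasDerivAt_id x).mul ((hasDerivAt_id x).sub_const 1)).mul hd2).div hd1 hux
  have hy : HasDerivAt
      (fun z => β / (β + γ) + 2 / (β + γ) * (z * (z - 1) * deriv u z / u z) ^ 2) _ x :=
    ((hp.pow 2).const_mul (2 / (β + γ))).const_add (β / (β + γ))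
  have hdd : deriv (deriv u) x = ((1 / (x ^ 2 * (x - 1) ^ 2)) * ((β + γ) * x / 2 - β / 2) * u x)
      - ((2 * x - 1) / (x * (x - 1))) * deriv u x := by
    linear_combination he
  rw [hfun, hy.deriv, hdd]
  simp only [Pi.mul_apply, Pi.div_apply, id, Nat.add_one_sub_one, Nat.reduceSub, pow_one, Nat.cast_ofNat]
  generalize deriv u x = v
  generalize u x = w at *
  obtain ⟨s, hs⟩ : ∃ s, s = β + γ := ⟨_, rfl⟩
  rw [← hs] at hβγ ⊢
  field_simp
  ring
end

section
/- The rational function y(x) = (3−√2)·x·(7x² − 16x + 4√2·x + 12 − 6√2) / (7x² + 6√2·x − 18x + 24 − 15√2) solves P_VI((2+√2)²/2, −8, (1+√2)²/2, −3/2) on any open set U ⊆ ℂ on which x ≠ 0, x ≠ 1, 7x² + 6√2·x − 18x + 24 − 15√2 ≠ 0, and y(x) ∉ {0, 1, x}. -/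
/-- The rational (over `ℚ(√2)`) function of the Remark, where `√2` is the positive
square root of `2`. -/
noncomputable def yRemark : ℂ → ℂ := fun x =>
  (3 - (Real.sqrt 2 : ℂ)) * x *
      (7 * x ^ 2 - 16 * x + 4 * (Real.sqrt 2 : ℂ) * x + 12 - 6 * (Real.sqrt 2 : ℂ))
    / (7 * x ^ 2 + 6 * (Real.sqrt 2 : ℂ) * x - 18 * x + 24 - 15 * (Real.sqrt 2 : ℂ))

/-- The polynomial identity behind the equation. -/
theorem yRemark_poly (s x P D B C W V : ℂ) (hs : s ^ 2 = 2)
    (hP : P = 7 * x ^ 2 - 16 * x + 4 * s * x + 12 - 6 * s)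
    (hD : D = 7 * x ^ 2 + 6 * s * x - 18 * x + 24 - 15 * s)
    (hB : B = (21 - 7 * s) * x ^ 2 + (21 * s - 42) * x + (24 - 15 * s))
    (hC : C = (14 - 7 * s) * x - (24 - 15 * s))
    (hW : W = (3 - s) * ((21 * x ^ 2 + 2 * (4 * s - 16) * x + 12 - 6 * s) * D
      - x * P * (14 * x + 6 * s - 18)))
    (hV : V = (3 - s) * ((42 * x + 2 * (4 * s - 16)) * D - x * P * 14) * D
      - 2 * W * (14 * x + 6 * s - 18)) :
    2 * V * x * (x - 1) * (3 - s) * P * B * C =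
      W ^ 2 * ((x - 1) * B * C + (3 - s) * x * P * C + (3 - s) * P * B)
      - 2 * (3 - s) * P * B * W * D * ((2 * x - 1) * C + D)
      + x * (x - 1) * ((2 + s) ^ 2 * (3 - s) ^ 2 * P ^ 2 * B ^ 2 * C ^ 2)
      - 16 * (x - 1) * D ^ 2 * B ^ 2 * C ^ 2
      + (1 + s) ^ 2 * x * D ^ 2 * (3 - s) ^ 2 * P ^ 2 * C ^ 2
      - 3 * D ^ 2 * (3 - s) ^ 2 * P ^ 2 * B ^ 2 := by
  subst hV hW hP hD hB hC
  grind

theorem yRemark_solves_painleveVI (U : Set ℂ) (hU : IsOpen U)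
    (hreg : ∀ x ∈ U, x ≠ 0 ∧ x ≠ 1 ∧
      7 * x ^ 2 + 6 * (Real.sqrt 2 : ℂ) * x - 18 * x + 24 - 15 * (Real.sqrt 2 : ℂ) ≠ 0 ∧
      yRemark x ≠ 0 ∧ yRemark x ≠ 1 ∧ yRemark x ≠ x) :
    SolvesPVI ((2 + (Real.sqrt 2 : ℂ)) ^ 2 / 2) (-8)
      ((1 + (Real.sqrt 2 : ℂ)) ^ 2 / 2) (-3 / 2) U yRemark := by
  have hs : ((Real.sqrt 2 : ℝ) : ℂ) ^ 2 = 2 := by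
    rw [← Complex.ofReal_pow, Real.sq_sqrt (by norm_num)]; norm_num
  unfold yRemark at *
  generalize ((Real.sqrt 2 : ℝ) : ℂ) = s at *
  set y : ℂ → ℂ := fun x => (3 - s) * x * (7 * x ^ 2 - 16 * x + 4 * s * x + 12 - 6 * s)
    / (7 * x ^ 2 + 6 * s * x - 18 * x + 24 - 15 * s) with hy
  let D : ℂ → ℂ := fun x => 7 * x ^ 2 + 6 * s * x - 18 * x + 24 - 15 * s
  let P : ℂ → ℂ := fun x => 7 * x ^ 2 - 16 * x + 4 * s * x + 12 - 6 * s
  let W : ℂ → ℂ := fun x => (3 - s) * ((21 * x ^ 2 + 2 * (4 * s - 16) * x + 12 - 6 * s) * D x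
      - x * P x * (14 * x + 6 * s - 18))
  let V : ℂ → ℂ := fun x => (3 - s) * ((42 * x + 2 * (4 * s - 16)) * D x - x * P x * 14) * D x
      - 2 * W x * (14 * x + 6 * s - 18)
  have hid (x : ℂ) : HasDerivAt (fun x : ℂ => x) 1 x := hasDerivAt_id x
  have dD (x : ℂ) : HasDerivAt D (14 * x + 6 * s - 18) x := by
    have := (((((hid x).pow 2).const_mul 7).add ((hid x).const_mul (6 * s))).sub
      ((hid x).const_mul 18)).add_const 24 |>.sub_const (15 * s)
    refine HasDerivAt.congr_deriv this ?_
    · norm_num; ring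
  have dP (x : ℂ) : HasDerivAt P (14 * x - 16 + 4 * s) x := by
    have := (((((hid x).pow 2).const_mul 7).sub ((hid x).const_mul 16)).add
      ((hid x).const_mul (4 * s))).add_const 12 |>.sub_const (6 * s)
    refine HasDerivAt.congr_deriv this ?_
    · norm_num; ring
  have dQ (x : ℂ) : HasDerivAt (fun x => 21 * x ^ 2 + 2 * (4 * s - 16) * x + 12 - 6 * s)
      (42 * x + 2 * (4 * s - 16)) x := by
    have := ((((hid x).pow 2).const_mul 21).add
      ((hid x).const_mul (2 * (4 * s - 16)))).add_const 12 |>.sub_const (6 * s)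
    refine HasDerivAt.congr_deriv this ?_
    · norm_num; ring
  have dL (x : ℂ) : HasDerivAt (fun x => 14 * x + 6 * s - 18) 14 x := by
    have := (((hid x).const_mul 14).add_const (6 * s)).sub_const 18
    refine HasDerivAt.congr_deriv this ?_
    · norm_num
  have dW (x : ℂ) : HasDerivAt W
      ((3 - s) * ((42 * x + 2 * (4 * s - 16)) * D x - x * P x * 14)) x := by
    have := (((dQ x).mul (dD x)).sub (((hid x).mul (dP x)).mul (dL x))).const_mul (3 - s)
    refine HasDerivAt.congr_deriv this ?_
    · simp only [P, Pi.mul_apply]; ring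
  have d1 (x : ℂ) (h : D x ≠ 0) : HasDerivAt y (W x / D x ^ 2) x := by
    have := (((hid x).const_mul (3 - s)).mul (dP x)).div (dD x) h
    refine HasDerivAt.congr_deriv this ?_
    · simp only [W, P, Pi.mul_apply]; ring
  have d2 (x : ℂ) (h : D x ≠ 0) : HasDerivAt (fun x => W x / D x ^ 2) (V x / D x ^ 3) x := by
    have := (dW x).div ((dD x).pow 2) (pow_ne_zero 2 h)
    refine HasDerivAt.congr_deriv this ?_
    · simp only [V, Pi.pow_apply]; field_simp; norm_num; ring
  have hd (x : ℂ) (hx : x ∈ U) : deriv y x = W x / D x ^ 2 := (d1 x (hreg x hx).2.2.1).deriv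
  have hd2 (x : ℂ) (hx : x ∈ U) : HasDerivAt (deriv y) (V x / D x ^ 3) x := by
    refine (d2 x (hreg x hx).2.2.1).congr_of_eventuallyEq ?_
    filter_upwards [hU.mem_nhds hx] with z hz using hd z hz
  refine ⟨fun x hx => (d1 x (hreg x hx).2.2.1).differentiableAt,
    fun x hx => (hd2 x hx).differentiableAt, fun x hx => ?_⟩
  obtain ⟨h0, h1, hD, hy0, hy1, hyx⟩ := hreg x hx
  refine ⟨h0, h1, hy0, hy1, hyx, ?_⟩
  rw [(hd2 x hx).deriv, hd x hx]
  have key := yRemark_poly s x (P x) (D x) _ _ (W x) (V x) hs rfl rfl rfl rfl rfl rfl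
  have e0 : y x = (3 - s) * x * P x / D x := rfl
  have e1 : y x - 1 = (x - 1) * ((21 - 7 * s) * x ^ 2 + (21 * s - 42) * x + (24 - 15 * s)) / D x := by
    rw [e0, eq_div_iff hD, sub_mul, div_mul_cancel₀ _ hD]
    simp only [P, D]; linear_combination (-4 * x ^ 2 + 6 * x) * hs
  have e2 : y x - x = x * (x - 1) * ((14 - 7 * s) * x - (24 - 15 * s)) / D x := by
    rw [e0, eq_div_iff hD, sub_mul, div_mul_cancel₀ _ hD]
    simp only [P, D]; linear_combination (-4 * x ^ 2 + 6 * x) * hs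
  have n0 := hy0
  have n1 := sub_ne_zero.2 hy1
  have n2 := sub_ne_zero.2 hyx
  have hD' : D x ≠ 0 := hD
  have h1' := sub_ne_zero.2 h1
  rw [e1] at n1 ⊢
  rw [e2] at n2 ⊢
  change y x ≠ 0 at n0
  rw [e0] at n0 ⊢
  generalize (21 - 7 * s) * x ^ 2 + (21 * s - 42) * x + (24 - 15 * s) = B at *
  generalize (14 - 7 * s) * x - (24 - 15 * s) = C at *
  generalize V x = v at *
  generalize W x = w at *
  generalize P x = p at *
  generalize D x = d at *
  generalize ha : 3 - s = a at *
  have hB : B ≠ 0 := by rintro rfl; simp at n1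
  have hC : C ≠ 0 := by rintro rfl; simp at n2
  have hp : p ≠ 0 := by rintro rfl; simp at n0
  have haz : a ≠ 0 := by rintro rfl; simp at n0
  clear n0 n1 n2 e0 e1 e2 hd hd2 d1 d2 dW dL dQ dP dD hreg
  field_simp
  linear_combination key
end

section
/- The rational function w(x) = (x/4)·(x+8)(x²+14x+21)/(2x+7)² solves P_VI(0, −18, 50, 0) on any open set U ⊆ ℂ on which x ≠ 0, x ≠ 1, 2x + 7 ≠ 0, and w(x) ∉ {0, 1, x}. -/
/-- The rational function from the counterexample to Theorem 4.2 of Yuan–Li. -/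
noncomputable def wCounter : ℂ → ℂ := fun x =>
  (x / 4) * ((x + 8) * (x ^ 2 + 14 * x + 21)) / (2 * x + 7) ^ 2

theorem wCounter_hasDerivAt (x : ℂ) (hD : 2 * x + 7 ≠ 0) :
    HasDerivAt wCounter
      ((4*x^4 + 72*x^3 + 462*x^2 + 1526*x + 1176) / (4 * (2 * x + 7)^3)) x := by
  have hi := hasDerivAt_id' x
  have hn := (hi.div_const 4).mul ((hi.add_const 8).mul
    (((hi.pow 2).add (hi.const_mul 14)).add_const 21))
  have hd := ((hi.const_mul 2).add_const 7).pow 2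
  have h := hn.div hd (pow_ne_zero 2 hD)
  refine HasDerivAt.congr_deriv (f := wCounter) h ?_
  simp only [Pi.mul_apply, Pi.add_apply, Pi.pow_apply]
  obtain ⟨D, hDe⟩ : ∃ D, D = 2 * x + 7 := ⟨_, rfl⟩
  rw [← hDe] at hD ⊢
  field_simp
  push_cast
  subst hDe
  ring

theorem wCounter_hasDerivAt_two (x : ℂ) (hD : 2 * x + 7 ≠ 0) :
    HasDerivAt
      (fun x : ℂ => (4*x^4 + 72*x^3 + 462*x^2 + 1526*x + 1176) / (4 * (2 * x + 7)^3))
      (((16*x^3 + 216*x^2 + 924*x + 1526) * (2*x+7)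
        - 6 * (4*x^4 + 72*x^3 + 462*x^2 + 1526*x + 1176)) / (4 * (2 * x + 7)^4)) x := by
  have hi := hasDerivAt_id' x
  have hn := (((((hi.pow 4).const_mul 4).add ((hi.pow 3).const_mul 72)).add
    ((hi.pow 2).const_mul 462)).add (hi.const_mul 1526)).add_const 1176
  have hd := (((hi.const_mul 2).add_const 7).pow 3).const_mul 4
  have h := hn.div hd (mul_ne_zero (by norm_num) (pow_ne_zero 3 hD))
  refine HasDerivAt.congr_deriv h ?_
  simp only [Pi.mul_apply, Pi.add_apply, Pi.pow_apply]
  field_simp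
  push_cast
  ring

/-- The rational function `w(x) = (x/4)(x+8)(x²+14x+21)/(2x+7)²` solves
`P_VI(0, -18, 50, 0)` on any open set avoiding the singularities. -/
theorem wCounter_solves_painleveVI (U : Set ℂ) (hU : IsOpen U)
    (hreg : ∀ x ∈ U, x ≠ 0 ∧ x ≠ 1 ∧ 2 * x + 7 ≠ 0 ∧
      wCounter x ≠ 0 ∧ wCounter x ≠ 1 ∧ wCounter x ≠ x) :
    SolvesPVI 0 (-18) 50 0 U wCounter := by
  have hev : ∀ x ∈ U, deriv wCounter =ᶠ[nhds x]
      (fun x : ℂ => (4*x^4 + 72*x^3 + 462*x^2 + 1526*x + 1176) / (4 * (2 * x + 7)^3)) := by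
    intro x hx
    filter_upwards [hU.mem_nhds hx] with z hz
    exact (wCounter_hasDerivAt z (hreg z hz).2.2.1).deriv
  have h2 : ∀ x ∈ U, HasDerivAt (deriv wCounter) _ x := fun x hx =>
    (wCounter_hasDerivAt_two x (hreg x hx).2.2.1).congr_of_eventuallyEq (hev x hx)
  refine ⟨fun x hx => (wCounter_hasDerivAt x (hreg x hx).2.2.1).differentiableAt,
    fun x hx => (h2 x hx).differentiableAt, fun x hx => ?_⟩
  obtain ⟨h0, h1, hD, hw0, hw1, hwx⟩ := hreg x hx
  refine ⟨h0, h1, hw0, hw1, hwx, ?_⟩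
  rw [(h2 x hx).deriv, (wCounter_hasDerivAt x hD).deriv]
  have hx1 : x - 1 ≠ 0 := sub_ne_zero.mpr h1
  have e0 : wCounter x = x * (x + 8) * (x ^ 2 + 14 * x + 21) / (4 * (2 * x + 7) ^ 2) := by
    unfold wCounter; field_simp
  have e1 : wCounter x - 1 = (x - 1) * (x + 2) * (x + 7) * (x + 14) / (4 * (2 * x + 7) ^ 2) := by
    rw [e0]
    obtain ⟨D, hDe⟩ : ∃ D, D = 2 * x + 7 := ⟨_, rfl⟩
    rw [← hDe] at hD ⊢
    field_simp
    subst hDe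
    ring
  have e2 : wCounter x - x = x * (x - 1) * (x ^ 2 + 7 * x + 28) / (4 * (2 * x + 7) ^ 2) := by
    rw [e0]
    obtain ⟨D, hDe⟩ : ∃ D, D = 2 * x + 7 := ⟨_, rfl⟩
    rw [← hDe] at hD ⊢
    field_simp
    subst hDe
    ring
  have n0 := hw0
  have n1 := sub_ne_zero.mpr hw1
  have n2 := sub_ne_zero.mpr hwx
  rw [e0] at n0
  rw [e1] at n1
  rw [e2] at n2
  rw [e1, e2, e0]
  simp only [ne_eq, div_eq_zero_iff, mul_eq_zero, not_or] at n0 n1 n2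
  obtain ⟨⟨⟨-, a1⟩, a2⟩, -⟩ := n0
  obtain ⟨⟨⟨⟨-, b1⟩, b2⟩, b3⟩, -⟩ := n1
  obtain ⟨⟨-, c1⟩, -⟩ := n2
  obtain ⟨D, hDe⟩ : ∃ D, D = 2 * x + 7 := ⟨_, rfl⟩
  obtain ⟨B, hBe⟩ : ∃ B, B = x ^ 2 + 14 * x + 21 := ⟨_, rfl⟩
  obtain ⟨C, hCe⟩ : ∃ C, C = x ^ 2 + 7 * x + 28 := ⟨_, rfl⟩
  rw [← hBe] at a2
  rw [← hCe] at c1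
  rw [← hDe] at hD
  rw [← hBe, ← hCe, ← hDe]
  field_simp
  subst hBe hCe hDe
  ring
end
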